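/- If a discrete group G has only countably many amenable subgroups and has no normal amenable subgroups other than the trivial subgroup {e}, then G is C*-simple. -/

import Mathlib

noncomputable section
open scoped ENNReal ComplexOrder lp
open MeasureTheory
set_option maxHeartbeats 1000000
set_option synthInstance.maxHeartbeats 1000000

universe u

variable {G : Type u} [Group G]

theorem translat_mem (g : G) (f : ℓ²(G, ℂ)) : Memℓp (fun h => f (g⁻¹ * h)) 2 := by
  have hf : Summable fun i : G => ‖f i‖ ^ (2 : ℝ≥0∞).toReal :=
    (memℓp_gen_iff (by norm_num)).1 (lp.memℓp f)
  exact memℓp_gen ((Equiv.mulLeft g⁻¹).summable_iff.2 hf)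

/-- The left regular representation of `g ∈ G` as a linear isometric bijection of `ℓ²(G)`,
given by `(λ_g ξ)(h) = ξ(g⁻¹ h)`. -/
def lregE (g : G) : ℓ²(G, ℂ) ≃ₗᵢ[ℂ] ℓ²(G, ℂ) :=
{ toFun := fun f => ⟨fun h => f (g⁻¹ * h), translat_mem g f⟩
  invFun := fun f => ⟨fun h => f (g * h), by
    have := translat_mem g⁻¹ f; simp only [inv_inv] at this; exact this⟩
  map_add' := by intro f₁ f₂; ext h; simp [lp.coeFn_add]; rfl
  map_smul' := by intro c f; ext h; simp [lp.coeFn_smul]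
  left_inv := by intro f; ext h; simp
  right_inv := by intro f; ext h; simp
  norm_map' := by
    intro f
    rw [lp.norm_eq_tsum_rpow (by norm_num) f, lp.norm_eq_tsum_rpow (by norm_num)]
    congr 1
    exact (Equiv.mulLeft g⁻¹).tsum_eq (fun h => ‖f h‖ ^ (2 : ℝ≥0∞).toReal) }

/-- The left regular representation `λ` as bounded operators on `ℓ²(G)`. -/
def lreg (g : G) : ℓ²(G, ℂ) →L[ℂ] ℓ²(G, ℂ) :=
  (lregE g).toContinuousLinearEquiv.toContinuousLinearMap

variable (G) in
/-- The reduced group C*-algebra `C*_λ(G)`: the norm-closed star subalgebra of the algebra of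
bounded operators on `ℓ²(G)` generated by the image of the left regular representation. -/
def redCstar : StarSubalgebra ℂ (ℓ²(G, ℂ) →L[ℂ] ℓ²(G, ℂ)) :=
  (StarAlgebra.adjoin ℂ (Set.range (lreg (G := G)))).topologicalClosure

variable (G) in
/-- `G` is C*-simple: `C*_λ(G)` has no closed two-sided ideals other than `{0}` and the
whole algebra. -/
def IsCstarSimple : Prop :=
  ∀ I : TwoSidedIdeal (redCstar G), IsClosed (I : Set (redCstar G)) → I = ⊥ ∨ I = ⊤

attribute [irreducible] redCstar lreg lregE

/-- Left translation of a bounded function on a group `H`. -/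
def translInfty {H : Type*} [Group H] (h : H) (f : lp (fun _ : H => ℝ) ∞) :
    lp (fun _ : H => ℝ) ∞ :=
  ⟨fun k => f (h⁻¹ * k), by
    apply memℓp_infty
    have : (Set.range fun k => ‖f (h⁻¹ * k)‖) = Set.range fun k => ‖f k‖ :=
      (Equiv.mulLeft h⁻¹).surjective.range_comp (fun k => ‖f k‖)
    rw [this]
    exact memℓp_infty_iff.1 (lp.memℓp f)⟩

/-- A group `H` is amenable: there exists a left-invariant mean on `ℓ∞(H)`, i.e. a unital
positive linear functional invariant under left translation. -/
def IsAmenable (H : Type*) [Group H] : Prop :=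
  ∃ m : lp (fun _ : H => ℝ) ∞ →ₗ[ℝ] ℝ,
    m 1 = 1 ∧ (∀ f : lp (fun _ : H => ℝ) ∞, (∀ k, 0 ≤ f k) → 0 ≤ m f) ∧
      ∀ (h : H) (f : lp (fun _ : H => ℝ) ∞), m (translInfty h f) = m f

/-! For a proper ideal `I` of `C*_λ(G)`, the states of the bounded operators on `ℓ²(G)` that vanish
on `I` form a compact convex set on which `G` acts by conjugation; let `L` be a minimal invariant
compact convex subset of it and `x` an extreme point of `L`. The equivariant copy of `ℓ∞(G)` inside
the bounded operators makes the stabilizer of every state amenable, and lets one convolve states.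
By minimality `x = φ * x` for some such state `φ`, and extremality of `x` puts the Poisson
transforms of `x` in the multiplicative domain of `φ`, so `φ(λ_s) ≠ 0` forces `s` to fix `x`.

Since only countably many stabilizers occur, Baire's theorem shows that a nonempty closed invariant
subset of `L` contains a point with only finitely many stabilizers along its orbit; such a
stabilizer lies in the normal core of the stabilizer of `x`, which is trivial. Applied to the points
whose translates are all fixed by some element of a finite set `F ∌ e`, this shows that some
translate of `x` is fixed by no element of `F`, and the corresponding translate of `φ` vanishes on
`λ_s` for all `s ∈ F`. The canonical trace, approximated on `C*_λ(G)` by such states, therefore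
vanishes on `I`, and as it is faithful, `I = 0`. -/

section ConvexDynamics

theorem exists_minimal_compact_subset {X : Type*} [TopologicalSpace X] [T2Space X]
    {P : Set X → Prop} (hP : ∀ c : Set (Set X), c.Nonempty → (∀ s ∈ c, P s) → P (⋂₀ c))
    {S : Set X} (hS : IsCompact S) (hSne : S.Nonempty) (hPS : P S) :
    ∃ L ⊆ S, Minimal (fun T => IsCompact T ∧ T.Nonempty ∧ P T) L := by
  refine zorn_superset_nonempty {T | IsCompact T ∧ T.Nonempty ∧ P T} (fun c hc hchain hcne => ?_)
    S ⟨hS, hSne, hPS⟩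
  have : Nonempty c := hcne.to_subtype
  have hclosed : ∀ s ∈ c, IsClosed s := fun s hs => (hc hs).1.isClosed
  refine ⟨⋂₀ c, ⟨?_, ?_, hP c hcne fun s hs => (hc hs).2.2⟩,
    fun s hs => Set.sInter_subset_of_mem hs⟩
  · obtain ⟨s, hs⟩ := hcne
    exact (hc hs).1.of_isClosed_subset (isClosed_sInter hclosed) (Set.sInter_subset_of_mem hs)
  · rw [Set.sInter_eq_iInter]
    exact IsCompact.nonempty_iInter_of_directed_nonempty_isCompact_isClosed _
      (IsChain.directed (f := id) hchain.symm) (fun s => (hc s.2).2.1) (fun s => (hc s.2).1)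
      fun s => hclosed s s.2

theorem eq_of_sum_smul_eq_of_mem_extremePoints {E ι : Type*} [AddCommGroup E] [Module ℝ E]
    [Fintype ι] {L : Set E} (hL : Convex ℝ L) {x : E} (hx : x ∈ L.extremePoints ℝ) {w : ι → ℝ}
    {y : ι → E} (hw : ∀ i, 0 < w i) (hw_sum : ∑ i, w i = 1) (hy : ∀ i, y i ∈ L)
    (hyx : ∑ i, w i • y i = x) (i : ι) : y i = x := by
  classical
  by_contra hi
  let J := Finset.univ.filter fun j => y j ≠ x
  have hJ_pos : 0 < ∑ j ∈ J, w j := Finset.sum_pos (fun j _ => hw j) ⟨i, by simp [J, hi]⟩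
  have hdiff : ∑ j ∈ J, w j • (y j - x) = 0 := by
    rw [Finset.sum_subset (Finset.subset_univ J) fun j _ hj => by simp_all [J]]
    simp only [smul_sub, Finset.sum_sub_distrib, ← Finset.sum_smul, hw_sum, hyx, one_smul, sub_self]
  have hcenter : J.centerMass w y = x := by
    simp only [smul_sub, Finset.sum_sub_distrib, ← Finset.sum_smul, sub_eq_zero] at hdiff
    rw [Finset.centerMass, hdiff, inv_smul_smul₀ hJ_pos.ne']
  have hmem : J.centerMass w y ∈ L \ {x} :=
    (hL.mem_extremePoints_iff_convex_sdiff.1 hx).2.centerMass_mem (fun j _ => (hw j).le) hJ_pos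
      fun j hj => ⟨hy j, (Finset.mem_filter.1 hj).2⟩
  exact hmem.2 hcenter

/-- A nonempty compact convex subset of `E` that is invariant under `G`. The minimal such sets
play the role of irreducible affine flows. -/
structure IsCompactConvexInvariant (G : Type*) {E : Type*} [AddCommGroup E] [Module ℝ E]
    [TopologicalSpace E] [SMul G E] (L : Set E) : Prop where
  isCompact : IsCompact L
  nonempty : L.Nonempty
  convex : Convex ℝ L
  smul_mem : ∀ (g : G), ∀ y ∈ L, g • y ∈ L

variable {E : Type*} [AddCommGroup E] [Module ℝ E] [TopologicalSpace E]

theorem IsCompactConvexInvariant.exists_minimal_subset {Γ : Type*} [T2Space E] [SMul Γ E]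
    {S : Set E} (hS : IsCompactConvexInvariant Γ S) :
    ∃ L ⊆ S, Minimal (IsCompactConvexInvariant Γ) L := by
  obtain ⟨L, hLS, hL, hmin⟩ := exists_minimal_compact_subset
    (P := fun T : Set E => Convex ℝ T ∧ ∀ g : Γ, ∀ y ∈ T, g • y ∈ T)
    (fun c _ hc => ⟨convex_sInter fun s hs => (hc s hs).1,
      fun g y hy s hs => (hc s hs).2 g y (hy s hs)⟩)
    hS.isCompact hS.nonempty ⟨hS.convex, hS.smul_mem⟩
  exact ⟨L, hLS, ⟨hL.1, hL.2.1, hL.2.2.1, hL.2.2.2⟩,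
    fun T hT => hmin ⟨hT.isCompact, hT.nonempty, hT.convex, hT.smul_mem⟩⟩

variable [ContinuousAdd E] [ContinuousConstSMul ℝ E] [DistribMulAction G E] [SMulCommClass G ℝ E]
  {L : Set E} {x : E}

-- By minimality the averages of selections `y i ∈ Y i` fill up `L`, and an extreme point is
-- such an average only if all the `y i` coincide with it.
theorem mem_of_minimal_of_permuted_family (hL : Minimal (IsCompactConvexInvariant G) L)
    (hx : x ∈ L.extremePoints ℝ) {ι : Type*} [Finite ι] {Y : ι → Set E} (hYL : ∀ i, Y i ⊆ L)
    (hY_closed : ∀ i, IsClosed (Y i)) (hY_ne : ∀ i, (Y i).Nonempty)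
    (hY_convex : ∀ i, Convex ℝ (Y i)) (σ : G → Equiv.Perm ι)
    (hσ : ∀ g i, ∀ y ∈ Y i, g • y ∈ Y (σ g i)) (i : ι) : x ∈ Y i := by
  have := Fintype.ofFinite ι
  have hn : (0 : ℝ) < Fintype.card ι := Nat.cast_pos.2 (Fintype.card_pos_iff.2 ⟨i⟩)
  let w : ℝ := (Fintype.card ι : ℝ)⁻¹
  have hw : ∑ _ : ι, w = 1 := by
    rw [Finset.sum_const, Finset.card_univ, nsmul_eq_mul, mul_inv_cancel₀ hn.ne']
  let A : (ι → E) →ₗ[ℝ] E := ∑ j, w • LinearMap.proj (R := ℝ) (φ := fun _ : ι => E) j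
  have hA : ∀ y, A y = ∑ j, w • y j := fun y => by
    simp only [A, LinearMap.sum_apply, LinearMap.smul_apply, LinearMap.proj_apply]
  have hA_cont : Continuous A := by
    rw [show (A : (ι → E) → E) = fun y => ∑ j, w • y j from funext hA]
    fun_prop
  have hAL : A '' Set.univ.pi Y ⊆ L := by
    rintro _ ⟨y, hy, rfl⟩
    rw [hA]
    exact hL.prop.convex.sum_mem (fun _ _ => inv_nonneg.2 hn.le) hw fun j _ => hYL j (hy j trivial)
  have hinv : ∀ g : G, ∀ z ∈ A '' Set.univ.pi Y, g • z ∈ A '' Set.univ.pi Y := by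
    rintro g _ ⟨y, hy, rfl⟩
    refine ⟨fun j => g • y ((σ g).symm j), fun j _ => ?_, ?_⟩
    · simpa only [Equiv.apply_symm_apply] using hσ g _ _ (hy ((σ g).symm j) trivial)
    · simp only [hA, Finset.smul_sum, smul_comm g w]
      exact Equiv.sum_comp (σ g).symm fun j => w • g • y j
  have himage : A '' Set.univ.pi Y = L := hL.eq_of_subset
    ⟨(isCompact_univ_pi fun j => hL.prop.isCompact.of_isClosed_subset (hY_closed j) (hYL j)).image
      hA_cont, (Set.univ_pi_nonempty_iff.2 hY_ne).image A,
      (convex_pi fun j _ => hY_convex j).linear_image A, hinv⟩ hAL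
  obtain ⟨y, hy, hyx⟩ := himage.ge hx.1
  rw [← eq_of_sum_smul_eq_of_mem_extremePoints hL.prop.convex hx (fun _ => inv_pos.2 hn) hw
    (fun j => hYL j (hy j trivial)) ((hA y).symm.trans hyx) i]
  exact hy i trivial

end ConvexDynamics

section Stabilizers

open MulAction

section Topological

variable {X : Type*} [TopologicalSpace X] [T2Space X] [MulAction G X] [ContinuousConstSMul G X]

theorem isClosed_setOf_le_stabilizer (H : Subgroup G) : IsClosed {y : X | H ≤ stabilizer G y} := by
  have : {y : X | H ≤ stabilizer G y} = ⋂ h ∈ H, {y | h • y = y} := by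
    ext y
    simp only [Set.mem_ofPred_eq, Set.mem_iInter, SetLike.le_def, mem_stabilizer_iff]
  rw [this]
  exact isClosed_biInter fun h _ => isClosed_eq (continuous_const_smul h) continuous_id

theorem stabilizer_smul_eq_of_mem_interior_closure {H : Subgroup G} {g : G} {y : X}
    (hy : stabilizer G y = H) (hyU : y ∈ interior (closure {z : X | stabilizer G z = H}))
    (hgyU : g • y ∈ interior (closure {z : X | stabilizer G z = H})) :
    stabilizer G (g • y) = H := by
  set U := interior (closure {z : X | stabilizer G z = H})
  have hU : ∀ u ∈ U, H ≤ stabilizer G u := fun u hu =>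
    closure_minimal (fun z (hz : stabilizer G z = H) => hz.ge) (isClosed_setOf_le_stabilizer H)
      (interior_subset hu)
  obtain ⟨z, hz, (hzH : stabilizer G z = H)⟩ :=
    mem_closure_iff.1 (interior_subset hgyU) ((g⁻¹ • ·) ⁻¹' U)
      (isOpen_interior.preimage (continuous_const_smul g⁻¹))
      (by rwa [Set.mem_preimage, inv_smul_smul])
  refine le_antisymm ?_ (hU _ hgyU)
  calc stabilizer G (g • y) = H.map (MulAut.conj g).toMonoidHom := by
        rw [stabilizer_smul_eq_stabilizer_map_conj, hy]
    _ ≤ (stabilizer G (g⁻¹ • z)).map (MulAut.conj g).toMonoidHom := Subgroup.map_mono (hU _ hz)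
    _ = H := by rw [← stabilizer_smul_eq_stabilizer_map_conj, smul_inv_smul, hzH]

-- Baire: some level set of the stabilizer map is somewhere dense, and finitely many translates
-- of its interior cover the space.
theorem exists_finite_range_stabilizer_smul_of_isMinimal [CompactSpace X] [Nonempty X]
    [IsMinimal G X] (hcount : (Set.range (stabilizer G : X → Subgroup G)).Countable) :
    ∃ y : X, (Set.range fun g : G => stabilizer G (g • y)).Finite := by
  have := hcount.to_subtype
  obtain ⟨H, hH⟩ := nonempty_interior_of_iUnion_of_closed
    (f := fun H : Set.range (stabilizer G : X → Subgroup G) =>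
      closure {z : X | stabilizer G z = H}) (fun _ => isClosed_closure)
    (Set.eq_univ_of_forall fun z =>
      Set.mem_iUnion.2 ⟨⟨_, z, rfl⟩, subset_closure (Set.mem_ofPred.2 rfl)⟩)
  obtain ⟨u, hu⟩ := hH
  obtain ⟨y, hyU, (hy : stabilizer G y = H)⟩ :=
    mem_closure_iff.1 (interior_subset hu) _ isOpen_interior hu
  obtain ⟨I, hI⟩ := isCompact_univ.exists_finite_cover_smul G isOpen_interior ⟨u, hu⟩
  refine ⟨y, (I.finite_toSet.image fun k => stabilizer G (k • y)).subset ?_⟩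
  rintro _ ⟨g, rfl⟩
  obtain ⟨k, hkI, hk⟩ := Set.mem_iUnion₂.1 (hI (Set.mem_univ (g • y)))
  rw [Set.mem_smul_set_iff_inv_smul_mem, smul_smul] at hk
  refine ⟨k, hkI, ?_⟩
  have hfix := (stabilizer_smul_eq_of_mem_interior_closure hy hyU hk).trans hy.symm
  calc stabilizer G (k • y) = stabilizer G (k • (k⁻¹ * g) • y) := by
        rw [stabilizer_smul_eq_stabilizer_map_conj k, stabilizer_smul_eq_stabilizer_map_conj k,
          hfix]
    _ = stabilizer G (g • y) := by rw [smul_smul, mul_inv_cancel_left]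

theorem exists_isMinimal_subMulAction {K : Set X} (hK : IsCompact K) (hK_ne : K.Nonempty)
    (hK_inv : ∀ g : G, ∀ y ∈ K, g • y ∈ K) :
    ∃ Z : SubMulAction G X, (Z : Set X) ⊆ K ∧ IsCompact (Z : Set X) ∧ (Z : Set X).Nonempty ∧
      IsMinimal G Z := by
  obtain ⟨Z, hZK, ⟨hZ, hZne, hZinv⟩, hZmin⟩ := exists_minimal_compact_subset
    (P := fun T : Set X => ∀ g : G, ∀ y ∈ T, g • y ∈ T)
    (fun c _ hc g y hy s hs => hc s hs g y (hy s hs)) hK hK_ne hK_inv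
  refine ⟨⟨Z, fun g _ => hZinv g _⟩, hZK, hZ, hZne, ⟨fun z => Subtype.dense_iff.2 ?_⟩⟩
  have horbit : orbit G (z : X) ⊆ Z := by
    rintro _ ⟨g, rfl⟩
    exact hZinv g _ z.2
  have hclosure : closure (orbit G (z : X)) ⊆ Z := closure_minimal horbit hZ.isClosed
  have hdense : Z ⊆ closure (orbit G (z : X)) :=
    hZmin ⟨hZ.of_isClosed_subset isClosed_closure hclosure, (nonempty_orbit _).closure,
      fun g y hy => smul_closure_orbit_subset g _ (Set.smul_mem_smul_set hy)⟩ hclosure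
  exact hdense.trans (closure_mono (SubMulAction.val_image_orbit z).ge)

theorem exists_finite_range_stabilizer_smul {K : Set X} (hK : IsCompact K) (hK_ne : K.Nonempty)
    (hK_inv : ∀ g : G, ∀ y ∈ K, g • y ∈ K) (hcount : (stabilizer G '' K).Countable) :
    ∃ y ∈ K, (Set.range fun g : G => stabilizer G (g • y)).Finite := by
  obtain ⟨Z, hZK, hZ, hZne, hZmin⟩ := exists_isMinimal_subMulAction hK hK_ne hK_inv
  have : CompactSpace Z := isCompact_iff_compactSpace.1 hZ
  have : Nonempty Z := hZne.to_subtype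
  have : ContinuousConstSMul G Z :=
    ⟨fun g => ((continuous_const_smul g).comp continuous_subtype_val).subtype_mk _⟩
  have hrange : Set.range (stabilizer G : Z → Subgroup G) ⊆ stabilizer G '' K := by
    rintro _ ⟨z, rfl⟩
    exact ⟨z, hZK z.2, (SubMulAction.stabilizer_of_subMul z).symm⟩
  obtain ⟨y, hy⟩ := exists_finite_range_stabilizer_smul_of_isMinimal (hcount.mono hrange)
  refine ⟨y, hZK y.2, ?_⟩
  simpa only [SubMulAction.stabilizer_of_subMul, SubMulAction.val_smul] using hy

end Topological

section Convex

variable {E : Type*} [AddCommGroup E] [Module ℝ E] [TopologicalSpace E] [T2Space E]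
  [ContinuousAdd E] [ContinuousConstSMul ℝ E] [DistribMulAction G E] [SMulCommClass G ℝ E]
  [ContinuousConstSMul G E] {L : Set E} {x : E}

theorem stabilizer_le_normalCore_of_finite (hL : Minimal (IsCompactConvexInvariant G) L)
    (hx : x ∈ L.extremePoints ℝ) {y : E} (hy : y ∈ L)
    (hfin : (Set.range fun g : G => stabilizer G (g • y)).Finite) :
    stabilizer G y ≤ (stabilizer G x).normalCore := by
  set O := Set.range fun g : G => stabilizer G (g • y)
  have := hfin.to_subtype
  let conj (g : G) : Equiv.Perm (Subgroup G) := (MulAut.conj g).mapSubgroup.toEquiv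
  have hconj (g : G) (z : E) : conj g (stabilizer G z) = stabilizer G (g • z) :=
    (stabilizer_smul_eq_stabilizer_map_conj g z).symm
  have hO (g : G) (H : Subgroup G) : conj g H ∈ O ↔ H ∈ O := by
    constructor
    · rintro ⟨k, hk : stabilizer G (k • y) = conj g H⟩
      refine ⟨g⁻¹ * k, (conj g).injective ?_⟩
      rw [hconj, smul_smul, mul_inv_cancel_left, hk]
    · rintro ⟨k, rfl⟩
      exact ⟨g * k, by simp only [hconj, smul_smul]⟩
  have hmem : ∀ H : O, x ∈ L ∩ {z | (H : Subgroup G) ≤ stabilizer G z} :=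
    mem_of_minimal_of_permuted_family hL hx (fun _ => Set.inter_subset_left)
      (fun H => hL.prop.isCompact.isClosed.inter (isClosed_setOf_le_stabilizer _))
      (by
        rintro ⟨_, k, rfl⟩
        exact ⟨k • y, hL.prop.smul_mem k y hy, le_refl (stabilizer G (k • y))⟩)
      (fun H => hL.prop.convex.inter fun z hz z' hz' a b _ _ _ h hh => by
        rw [mem_stabilizer_iff, smul_add, smul_comm h a, smul_comm h b, hz hh, hz' hh])
      (fun g => (conj g).subtypePerm (hO g))
      (fun g H z hz => ⟨hL.prop.smul_mem g z hz.1, by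
        rw [Set.mem_ofPred_eq, ← hconj]
        exact (MulAut.conj g).mapSubgroup.monotone hz.2⟩)
  intro h hh g
  refine (hmem ⟨_, g, rfl⟩).2 ?_
  rw [mem_stabilizer_iff, smul_smul, inv_mul_cancel_right, ← smul_smul, hh]

theorem exists_disjoint_stabilizer_smul (hL : Minimal (IsCompactConvexInvariant G) L)
    (hx : x ∈ L.extremePoints ℝ) (hcount : (stabilizer G '' L).Countable)
    (hcore : (stabilizer G x).normalCore = ⊥) {F : Finset G} (hF : 1 ∉ F) :
    ∃ g : G, ∀ f ∈ F, f ∉ stabilizer G (g • x) := by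
  by_contra! hfix
  let K : Set E := L ∩ {y | ∀ g : G, ∃ f ∈ F, f • g • y = g • y}
  have hK : IsCompact K := hL.prop.isCompact.inter_right <| by
    simp only [Set.ofPred_forall, ← exists_prop, Set.ofPred_exists]
    exact isClosed_iInter fun g => F.finite_toSet.isClosed_biUnion fun f _ =>
      isClosed_eq (by fun_prop) (by fun_prop)
  obtain ⟨y, ⟨hyL, hyF⟩, hy⟩ := exists_finite_range_stabilizer_smul (G := G) hK ⟨x, hx.1, hfix⟩
    (fun h y hy => ⟨hL.prop.smul_mem h y hy.1, fun g => by
      simpa only [smul_smul] using hy.2 (g * h)⟩)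
    (hcount.mono (Set.image_mono Set.inter_subset_left))
  have hbot : stabilizer G y ≤ ⊥ := hcore ▸ stabilizer_le_normalCore_of_finite hL hx hyL hy
  obtain ⟨f, hfF, hf⟩ := hyF 1
  rw [one_smul] at hf
  exact hF (Subgroup.mem_bot.1 (hbot hf) ▸ hfF)

end Convex

end Stabilizers

section States

section WeakDual

variable {E : Type*} [NormedAddCommGroup E] [NormedSpace ℂ E]

instance instIsScalarTowerRealComplexWeakDual : IsScalarTower ℝ ℂ (WeakDual ℂ E) :=
  ⟨fun r c φ => DFunLike.ext _ _ fun a => smul_assoc r c (φ a)⟩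

instance instLocallyConvexSpaceRealWeakDual : LocallyConvexSpace ℝ (WeakDual ℂ E) :=
  WeakBilin.locallyConvexSpace (𝕜 := ℂ) (B := topDualPairing ℂ E)

theorem exists_re_apply_lt_of_notMem {K : Set (WeakDual ℂ E)} (hK : Convex ℝ K)
    (hK_closed : IsClosed K) {φ : WeakDual ℂ E} (hφ : φ ∉ K) :
    ∃ (a : E) (u : ℝ), (∀ ψ ∈ K, (ψ a).re < u) ∧ u < (φ a).re := by
  have hseparated :=
    RCLike.geometric_hahn_banach_closed_point (𝕜 := ℂ) (E := WeakDual ℂ E) hK hK_closed hφ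
  obtain ⟨f, u, hf, hu⟩ := hseparated
  obtain ⟨a, rfl⟩ := LinearMap.dualEmbedding_surjective (topDualPairing ℂ E) f
  exact ⟨a, u, hf, hu⟩

end WeakDual

variable {B : Type*} [CStarAlgebra B]

theorem norm_add_I_smul_one_sq_le {a : B} (ha : IsSelfAdjoint a) (t : ℝ) :
    ‖a + (Complex.I * t) • (1 : B)‖ ^ 2 ≤ ‖a‖ ^ 2 + t ^ 2 := by
  have hstar : star (a + (Complex.I * t) • (1 : B)) * (a + (Complex.I * t) • (1 : B)) =
      a * a + ((t ^ 2 : ℝ) : ℂ) • (1 : B) := by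
    have hstar_I : star (Complex.I * (t : ℂ)) = -(Complex.I * t) := by
      rw [Complex.star_def, map_mul, Complex.conj_I, Complex.conj_ofReal, neg_mul]
    have hsq : -(Complex.I * (t : ℂ)) * (Complex.I * t) = ((t ^ 2 : ℝ) : ℂ) := by
      push_cast
      linear_combination (-(t : ℂ) ^ 2) * Complex.I_sq
    rw [star_add, star_smul, ha.star_eq, star_one, hstar_I, ← hsq]
    simp only [add_mul, mul_add, smul_mul_assoc, mul_smul_comm, one_mul, mul_one]
    module
  have hone : ‖(1 : B)‖ ≤ 1 := by
    rcases subsingleton_or_nontrivial B with hB | hB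
    · rw [Subsingleton.elim (1 : B) 0, norm_zero]
      exact zero_le_one
    · exact CStarRing.norm_one.le
  calc ‖a + (Complex.I * t) • (1 : B)‖ ^ 2 = ‖a * a + ((t ^ 2 : ℝ) : ℂ) • (1 : B)‖ := by
        rw [sq, ← CStarRing.norm_star_mul_self, hstar]
    _ ≤ ‖a‖ * ‖a‖ + t ^ 2 * ‖(1 : B)‖ := by
        refine (norm_add_le _ _).trans (add_le_add (norm_mul_le a a) ?_)
        rw [norm_smul, Complex.norm_real, Real.norm_of_nonneg (sq_nonneg t)]
    _ ≤ ‖a‖ ^ 2 + t ^ 2 := by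
        rw [sq ‖a‖]
        exact add_le_add le_rfl (mul_le_of_le_one_right (sq_nonneg t) hone)

theorem im_apply_eq_zero_of_norm_le {φ : WeakDual ℂ B} (hφ_one : φ 1 = 1)
    (hφ : ∀ a, ‖φ a‖ ≤ ‖a‖) {a : B} (ha : IsSelfAdjoint a) : (φ a).im = 0 := by
  have hbound (t : ℝ) : ((φ a).im + t) ^ 2 ≤ ‖a‖ ^ 2 + t ^ 2 := by
    have hval : (φ (a + (Complex.I * t) • (1 : B))).im = (φ a).im + t := by
      rw [map_add, map_smul, hφ_one, smul_eq_mul, mul_one, Complex.add_im, Complex.I_mul_im,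
        Complex.ofReal_re]
    refine le_trans ?_ (norm_add_I_smul_one_sq_le ha t)
    rw [← hval, ← sq_abs]
    gcongr
    exact (Complex.abs_im_le_norm _).trans (hφ _)
  by_contra hne
  have hlarge := hbound ((‖a‖ ^ 2 + 1) / (φ a).im)
  have hcancel : (φ a).im * ((‖a‖ ^ 2 + 1) / (φ a).im) = ‖a‖ ^ 2 + 1 := mul_div_cancel₀ _ hne
  nlinarith [sq_nonneg (φ a).im, sq_nonneg ‖a‖]

variable [PartialOrder B]

/-- A state of a unital C⋆-algebra: a unital positive functional. States are taken in the weak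
dual so that the set of all states is compact. -/
structure IsState (φ : WeakDual ℂ B) : Prop where
  map_one : φ 1 = 1
  map_nonneg : ∀ a, 0 ≤ a → 0 ≤ φ a

theorem convex_setOf_isState : Convex ℝ {φ : WeakDual ℂ B | IsState φ} := by
  intro φ hφ ψ hψ a b ha hb hab
  have hcomb (c : B) : (a • φ + b • ψ) c = (a : ℂ) * φ c + (b : ℂ) * ψ c := rfl
  refine ⟨?_, fun c hc => ?_⟩
  · rw [hcomb, hφ.map_one, hψ.map_one, mul_one, mul_one, ← Complex.ofReal_add, hab,
      Complex.ofReal_one]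
  · rw [hcomb]
    exact add_nonneg (mul_nonneg (Complex.zero_le_real.2 ha) (hφ.map_nonneg c hc))
      (mul_nonneg (Complex.zero_le_real.2 hb) (hψ.map_nonneg c hc))

variable [StarOrderedRing B] {φ : WeakDual ℂ B}

namespace IsState

/-- A state as a positive linear map, giving access to its GNS construction. -/
def toPositiveLinearMap (hφ : IsState φ) : B →ₚ[ℂ] ℂ :=
  PositiveLinearMap.mk₀ (φ : B →ₗ[ℂ] ℂ) hφ.map_nonneg

theorem map_star (hφ : IsState φ) (a : B) : φ (star a) = star (φ a) :=
  StarHomClass.map_star hφ.toPositiveLinearMap a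

theorem norm_map_star_mul_sq_le (hφ : IsState φ) (a b : B) :
    ‖φ (star a * b)‖ ^ 2 ≤ (φ (star a * a)).re * (φ (star b * b)).re := by
  let f := hφ.toPositiveLinearMap
  have hnonneg (c : B) : 0 ≤ (φ (star c * c)).re :=
    (Complex.nonneg_iff.1 (hφ.map_nonneg _ (star_mul_self_nonneg c))).1
  have hgns : ‖φ (star a * b)‖ ≤ √(φ (star a * a)).re * √(φ (star b * b)).re :=
    norm_inner_le_norm (𝕜 := ℂ) (f.toPreGNS a) (f.toPreGNS b)
  calc ‖φ (star a * b)‖ ^ 2 ≤ (√(φ (star a * a)).re * √(φ (star b * b)).re) ^ 2 := by gcongr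
    _ = (φ (star a * a)).re * (φ (star b * b)).re := by
      rw [mul_pow, Real.sq_sqrt (hnonneg a), Real.sq_sqrt (hnonneg b)]

theorem norm_map_le (hφ : IsState φ) (a : B) : ‖φ a‖ ≤ ‖a‖ := by
  have hcs := hφ.norm_map_star_mul_sq_le 1 a
  rw [star_one, one_mul, one_mul, hφ.map_one, Complex.one_re, one_mul] at hcs
  have hpos := hφ.map_nonneg _
    (sub_nonneg.2 (CStarAlgebra.star_mul_le_algebraMap_norm_sq (a := a)))
  rw [Algebra.algebraMap_eq_smul_one, ← Complex.coe_smul, map_sub, map_smul, hφ.map_one,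
    smul_eq_mul, mul_one] at hpos
  have hre := (Complex.nonneg_iff.1 hpos).1
  rw [Complex.sub_re, Complex.ofReal_re] at hre
  exact le_of_sq_le_sq (by linarith) (norm_nonneg a)

theorem map_mul_eq_zero_of_left (hφ : IsState φ) {T : B} (hT : φ (T * star T) = 0) (b : B) :
    φ (T * b) = 0 := by
  have hcs := hφ.norm_map_star_mul_sq_le (star T) b
  rw [star_star, hT, Complex.zero_re, zero_mul] at hcs
  exact norm_eq_zero.1 (pow_eq_zero_iff two_ne_zero |>.1 (le_antisymm hcs (sq_nonneg _)))

theorem map_mul_eq_zero_of_right (hφ : IsState φ) {T : B} (hT : φ (star T * T) = 0) (b : B) :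
    φ (b * T) = 0 := by
  have hcs := hφ.norm_map_star_mul_sq_le (star b) T
  rw [star_star, hT, Complex.zero_re, mul_zero] at hcs
  exact norm_eq_zero.1 (pow_eq_zero_iff two_ne_zero |>.1 (le_antisymm hcs (sq_nonneg _)))

theorem exists_isState_map_conj_eq (hφ : IsState φ) (w : B) :
    ∃ ψ : WeakDual ℂ B, IsState ψ ∧ ∀ b, φ (star w * b * w) = φ (star w * w) * ψ b := by
  by_cases hw : φ (star w * w) = 0
  · exact ⟨φ, hφ, fun b => by rw [hw, zero_mul, hφ.map_mul_eq_zero_of_right hw]⟩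
  let ψ : WeakDual ℂ B := StrongDual.toWeakDual ((φ (star w * w))⁻¹ •
    (WeakDual.toStrongDual φ).comp (ContinuousLinearMap.mulLeftRight ℂ B (star w) w))
  have hψ (b : B) : ψ b = (φ (star w * w))⁻¹ * φ (star w * b * w) := rfl
  refine ⟨ψ, ⟨?_, fun a ha => ?_⟩, fun b => by rw [hψ, mul_inv_cancel_left₀ hw]⟩
  · rw [hψ, mul_one, inv_mul_cancel₀ hw]
  · rw [hψ]
    exact mul_nonneg (inv_nonneg.2 (hφ.map_nonneg _ (star_mul_self_nonneg w)))
      (hφ.map_nonneg _ (star_left_conjugate_nonneg ha w))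

end IsState

theorem isCompact_setOf_isState : IsCompact {φ : WeakDual ℂ B | IsState φ} := by
  have hset : {φ : WeakDual ℂ B | IsState φ} = {φ | φ 1 = 1} ∩ ⋂ a, ⋂ _ : 0 ≤ a, {φ | 0 ≤ φ a} := by
    ext φ
    simp only [Set.mem_inter_iff, Set.mem_iInter, Set.mem_ofPred_eq]
    exact ⟨fun h => ⟨h.map_one, h.map_nonneg⟩, fun h => ⟨h.1, h.2⟩⟩
  have hclosed : IsClosed {φ : WeakDual ℂ B | IsState φ} := by
    rw [hset]
    exact (isClosed_eq (WeakDual.eval_continuous 1) continuous_const).inter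
      (isClosed_iInter fun a => isClosed_iInter fun _ =>
        isClosed_le continuous_const (WeakDual.eval_continuous a))
  refine (WeakDual.isCompact_closedBall (𝕜 := ℂ) (E := B) 0 1).of_isClosed_subset hclosed
    fun φ hφ => mem_closedBall_zero_iff.2 ?_
  exact ContinuousLinearMap.opNorm_le_bound _ zero_le_one fun a => by
    rw [one_mul]
    exact IsState.norm_map_le hφ a

theorem isState_of_norm_le (hφ_one : φ 1 = 1) (hφ : ∀ a, ‖φ a‖ ≤ ‖a‖) : IsState φ := by
  refine ⟨hφ_one, fun a ha => Complex.nonneg_iff.2 ⟨?_, ?_⟩⟩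
  · have hle : ‖algebraMap ℝ B ‖a‖ - a‖ ≤ ‖a‖ := by
      have hnonneg : 0 ≤ algebraMap ℝ B ‖a‖ - a :=
        sub_nonneg.2 (IsSelfAdjoint.of_nonneg ha).le_algebraMap_norm_self
      rw [CStarAlgebra.norm_le_iff_le_algebraMap _ (norm_nonneg a) hnonneg]
      exact sub_le_self _ ha
    have hre := (Complex.re_le_norm _).trans ((hφ _).trans hle)
    rw [Algebra.algebraMap_eq_smul_one, ← Complex.coe_smul, map_sub, map_smul, hφ_one, smul_eq_mul,
      mul_one, Complex.sub_re, Complex.ofReal_re] at hre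
    linarith
  · exact (im_apply_eq_zero_of_norm_le hφ_one hφ (IsSelfAdjoint.of_nonneg ha)).symm

theorem exists_isState_eq_zero_on {V : Submodule ℂ B} (hV : ∀ v ∈ V, 1 ≤ ‖1 - v‖) :
    ∃ φ : WeakDual ℂ B, IsState φ ∧ ∀ v ∈ V, φ v = 0 := by
  have : Nontrivial B := by
    have hone := hV 0 V.zero_mem
    rw [sub_zero] at hone
    exact ⟨1, 0, norm_pos_iff.1 (zero_lt_one.trans_le hone)⟩
  have hnorm : ‖V.mkQ 1‖ = 1 := by
    refine le_antisymm ((Submodule.Quotient.norm_mk_le V 1).trans CStarRing.norm_one.le) ?_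
    have hdist : 1 ≤ Metric.infDist (1 : B) V :=
      (Metric.le_infDist ⟨0, V.zero_mem⟩).2 fun v hv => (hV v hv).trans_eq (dist_eq_norm 1 v).symm
    exact hdist.trans_eq (QuotientAddGroup.norm_mk (S := V.toAddSubgroup) (1 : B)).symm
  obtain ⟨f, hf, hf_one⟩ := exists_dual_vector ℂ (V.mkQ 1) (by rw [hnorm]; exact one_ne_zero)
  have hle (a : B) : ‖f (V.mkQ a)‖ ≤ 1 * ‖a‖ := by
    refine (f.le_of_opNorm_le hf.le _).trans ?_
    gcongr
    exact Submodule.Quotient.norm_mk_le V a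
  let φ : WeakDual ℂ B := StrongDual.toWeakDual ((f.toLinearMap ∘ₗ V.mkQ).mkContinuous 1 hle)
  refine ⟨φ, isState_of_norm_le ?_ fun a => (hle a).trans_eq (one_mul _), fun v hv => ?_⟩
  · change f (V.mkQ 1) = 1
    rw [hf_one, hnorm]
    exact Complex.ofReal_one
  · change f (V.mkQ v) = 0
    exact (congrArg f ((Submodule.Quotient.mk_eq_zero V).2 hv)).trans (map_zero f)

end States

section BoundedFunctions

variable {ι : Type*}

theorem exists_star_mul_self_eq {f : lp (fun _ : ι => ℂ) ∞} (hf : ∀ s, 0 ≤ f s) :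
    ∃ w : lp (fun _ : ι => ℂ) ∞, star w * w = f := by
  refine ⟨⟨fun s => (√(f s).re : ℝ), memℓp_infty ⟨√‖f‖, ?_⟩⟩, lp.ext (funext fun s => ?_)⟩
  · rintro _ ⟨s, rfl⟩
    dsimp only
    rw [Complex.norm_real, Real.norm_of_nonneg (Real.sqrt_nonneg _)]
    exact Real.sqrt_le_sqrt
      ((Complex.re_le_norm _).trans (lp.norm_apply_le_norm ENNReal.top_ne_zero f s))
  · change star ((√(f s).re : ℝ) : ℂ) * ((√(f s).re : ℝ) : ℂ) = f s
    obtain ⟨hre, him⟩ := Complex.nonneg_iff.1 (hf s)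
    rw [Complex.star_def, Complex.conj_ofReal, ← Complex.ofReal_mul, Real.mul_self_sqrt hre]
    exact Complex.ext (Complex.ofReal_re _) ((Complex.ofReal_im _).trans him)

theorem eq_top_of_forall_mem_unitInterval {V : Submodule ℂ (lp (fun _ : ι => ℂ) ∞)}
    (hV : ∀ f : lp (fun _ : ι => ℂ) ∞, (∀ s, 0 ≤ f s ∧ f s ≤ 1) → f ∈ V) : V = ⊤ := by
  have hself (f : lp (fun _ : ι => ℂ) ∞) (hf : IsSelfAdjoint f) : f ∈ V := by
    have hf_real (s : ι) : (((f s).re : ℝ) : ℂ) = f s :=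
      Complex.conj_eq_iff_re.1 (congrArg (fun h : lp (fun _ : ι => ℂ) ∞ => h s) hf.star_eq)
    obtain ⟨c, hc, hf_le⟩ : ∃ c > 0, ∀ s, |(f s).re| ≤ c :=
      ⟨‖f‖ + 1, by positivity, fun s => (Complex.abs_re_le_norm _).trans <|
        (lp.norm_apply_le_norm ENNReal.top_ne_zero f s).trans (lt_add_one _).le⟩
    have hshift : (c : ℂ) • (1 : lp (fun _ : ι => ℂ) ∞) + f ∈ V := by
      rw [← V.smul_mem_iff (s := (((2 * c)⁻¹ : ℝ) : ℂ)) (by simpa using hc.ne')]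
      refine hV _ fun s => ?_
      change 0 ≤ (((2 * c)⁻¹ : ℝ) : ℂ) * ((c : ℂ) * 1 + f s) ∧
        (((2 * c)⁻¹ : ℝ) : ℂ) * ((c : ℂ) * 1 + f s) ≤ 1
      have hval : (((2 * c)⁻¹ : ℝ) : ℂ) * ((c : ℂ) * 1 + f s) =
          (((2 * c)⁻¹ * (c + (f s).re) : ℝ) : ℂ) := by
        rw [mul_one, Complex.ofReal_mul, Complex.ofReal_add, hf_real]
      have hf_bounds := abs_le.1 (hf_le s)
      rw [hval, Complex.zero_le_real, ← Complex.ofReal_one, Complex.real_le_real,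
        inv_mul_le_iff₀ (by positivity)]
      exact ⟨mul_nonneg (by positivity) (by linarith), by linarith⟩
    have hone : (1 : lp (fun _ : ι => ℂ) ∞) ∈ V := hV 1 fun _ => ⟨zero_le_one, le_rfl⟩
    exact (V.add_mem_iff_right (V.smul_mem _ hone)).1 hshift
  refine Submodule.eq_top_iff'.2 fun f => ?_
  rw [← realPart_add_I_smul_imaginaryPart f]
  exact V.add_mem (hself _ (realPart f).2) (V.smul_mem _ (hself _ (imaginaryPart f).2))

variable {B : Type*} [CStarAlgebra B] [PartialOrder B] [StarOrderedRing B]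
  (M : lp (fun _ : ι => ℂ) ∞ →⋆ₐ[ℂ] B)

theorem map_nonneg_of_forall_nonneg {f : lp (fun _ : ι => ℂ) ∞} (hf : ∀ s, 0 ≤ f s) :
    0 ≤ M f := by
  obtain ⟨w, rfl⟩ := exists_star_mul_self_eq hf
  rw [map_mul, map_star]
  exact star_mul_self_nonneg (M w)

theorem IsState.re_map_le {φ : WeakDual ℂ B} (hφ : IsState φ)
    {f : lp (fun _ : ι => ℂ) ∞} {u : ℝ} (hf : ∀ s, (f s).re ≤ u) : (φ (M f)).re ≤ u := by
  have hnonneg : 0 ≤ M (((2 * u : ℝ) : ℂ) • 1 - (f + star f)) := by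
    refine map_nonneg_of_forall_nonneg M fun s => ?_
    change (0 : ℂ) ≤ ((2 * u : ℝ) : ℂ) * 1 - (f s + (starRingEnd ℂ) (f s))
    rw [mul_one, Complex.add_conj, ← Complex.ofReal_sub, Complex.zero_le_real]
    linarith [hf s]
  have hφ_nonneg := hφ.map_nonneg _ hnonneg
  rw [map_sub, map_sub, map_smul, map_smul, _root_.map_one, hφ.map_one, map_add, map_add,
    StarHomClass.map_star, hφ.map_star, smul_eq_mul, mul_one, Complex.star_def, Complex.add_conj,
    ← Complex.ofReal_sub, Complex.zero_le_real] at hφ_nonneg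
  linarith

theorem IsState.exists_isState_map_mul_eq {φ : WeakDual ℂ B} (hφ : IsState φ)
    {R : lp (fun _ : ι => ℂ) ∞} (hR : ∀ s, 0 ≤ R s) :
    ∃ ψ : WeakDual ℂ B, IsState ψ ∧ ∀ f, φ (M (R * f)) = φ (M R) * ψ (M f) := by
  obtain ⟨w, rfl⟩ := exists_star_mul_self_eq hR
  obtain ⟨ψ, hψ, hφψ⟩ := hφ.exists_isState_map_conj_eq (M w)
  refine ⟨ψ, hψ, fun f => ?_⟩
  rw [mul_right_comm, map_mul M, map_mul M, map_mul M, StarHomClass.map_star, hφψ]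

end BoundedFunctions

section Dynamics

open scoped CStarAlgebra in
/-- A ⋆-homomorphism of C⋆-algebras as a continuous linear map. -/
def starAlgHomToCLM {A B : Type*} [CStarAlgebra A] [CStarAlgebra B] (M : A →⋆ₐ[ℂ] B) : A →L[ℂ] B :=
  ⟨(M : A →ₗ[ℂ] B), map_continuous M⟩

/-- An action of the discrete group `G` on the C⋆-algebra `B` by ⋆-automorphisms. -/
class CStarDynamics (G B : Type*) [Group G] [CStarAlgebra B] extends MulSemiringAction G B,
    SMulCommClass G ℂ B where
  smul_star : ∀ (g : G) (a : B), g • star a = star (g • a)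

variable {B : Type*} [CStarAlgebra B] [CStarDynamics G B]

/-- The ⋆-automorphism by which `g` acts, as a ⋆-homomorphism. -/
def CStarDynamics.toStarAlgHom (B : Type*) [CStarAlgebra B] [CStarDynamics G B] (g : G) :
    B →⋆ₐ[ℂ] B where
  __ := MulSemiringAction.toAlgHom ℂ B g
  map_star' a := CStarDynamics.smul_star g a

theorem norm_smul_le_of_cstarDynamics (g : G) (a : B) : ‖g • a‖ ≤ ‖a‖ :=
  NonUnitalStarAlgHom.norm_apply_le (CStarDynamics.toStarAlgHom B g) a

theorem smul_nonneg_of_cstarDynamics [PartialOrder B] [StarOrderedRing B] (g : G) {a : B}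
    (ha : 0 ≤ a) : 0 ≤ g • a :=
  map_nonneg (CStarDynamics.toStarAlgHom B g) ha

/-- The dual action `(g • φ) a = φ (g⁻¹ • a)` on functionals. -/
instance instSMulWeakDualOfCStarDynamics : SMul G (WeakDual ℂ B) where
  smul g φ := StrongDual.toWeakDual ((WeakDual.toStrongDual φ).comp
    (starAlgHomToCLM (CStarDynamics.toStarAlgHom B g⁻¹)))

theorem weakDual_smul_apply (g : G) (φ : WeakDual ℂ B) (a : B) : (g • φ) a = φ (g⁻¹ • a) := rfl

instance instDistribMulActionWeakDualOfCStarDynamics : DistribMulAction G (WeakDual ℂ B) where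
  one_smul φ := DFunLike.ext _ _ fun a => by rw [weakDual_smul_apply, inv_one, one_smul]
  mul_smul g h φ := DFunLike.ext _ _ fun a => by
    simp only [weakDual_smul_apply, mul_inv_rev, mul_smul]
  smul_zero _ := rfl
  smul_add _ _ _ := rfl

instance instSMulCommClassWeakDualOfCStarDynamics : SMulCommClass G ℝ (WeakDual ℂ B) :=
  ⟨fun _ _ _ => rfl⟩

instance instContinuousConstSMulWeakDualOfCStarDynamics : ContinuousConstSMul G (WeakDual ℂ B) :=
  ⟨fun g => WeakDual.continuous_of_continuous_eval fun a => WeakDual.eval_continuous (g⁻¹ • a)⟩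

theorem IsState.smul [PartialOrder B] [StarOrderedRing B] {φ : WeakDual ℂ B} (hφ : IsState φ)
    (g : G) : IsState (g • φ) :=
  ⟨by rw [weakDual_smul_apply, smul_one, hφ.map_one],
    fun _ ha => hφ.map_nonneg _ (smul_nonneg_of_cstarDynamics g⁻¹ ha)⟩

/-- Left translation on the complex-valued bounded functions on `G`. -/
def leftTranslate (g : G) (f : lp (fun _ : G => ℂ) ∞) : lp (fun _ : G => ℂ) ∞ :=
  ⟨fun k => f (g⁻¹ * k), memℓp_infty ⟨‖f‖, by
    rintro _ ⟨k, rfl⟩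
    exact lp.norm_apply_le_norm ENNReal.top_ne_zero f _⟩⟩

variable (G) in
/-- The Poisson map of the functional `q`, sending `a : B` to the function `s ↦ (s • q) a`. -/
def poisson (q : WeakDual ℂ B) : B →L[ℂ] lp (fun _ : G => ℂ) ∞ :=
  have hbound (a : B) (s : G) : ‖(s • q) a‖ ≤ ‖WeakDual.toStrongDual q‖ * ‖a‖ :=
    (WeakDual.toStrongDual q).le_opNorm_of_le (norm_smul_le_of_cstarDynamics s⁻¹ a)
  LinearMap.mkContinuous
    { toFun := fun a => ⟨fun s => (s • q) a, memℓp_infty ⟨‖WeakDual.toStrongDual q‖ * ‖a‖, by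
        rintro _ ⟨s, rfl⟩
        exact hbound a s⟩⟩
      map_add' := fun a b => lp.ext (funext fun s => map_add (s • q) a b)
      map_smul' := fun c a => lp.ext (funext fun s => map_smul (s • q) c a) }
    ‖WeakDual.toStrongDual q‖ fun a => lp.norm_le_of_forall_le (by positivity) (hbound a)

theorem poisson_smul (q : WeakDual ℂ B) (g : G) (a : B) :
    poisson G q (g • a) = leftTranslate g (poisson G q a) :=
  lp.ext <| funext fun s => by
    change q (s⁻¹ • g • a) = q ((g⁻¹ * s)⁻¹ • a)
    rw [smul_smul, mul_inv_rev, inv_inv]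

variable (M : lp (fun _ : G => ℂ) ∞ →⋆ₐ[ℂ] B)

/-- The convolution `φ * q` of two functionals: average the translates `s • q` against the
finitely additive measure that `φ` induces on `G` via the copy `M` of `ℓ∞(G)` in `B`. -/
def convolve (φ q : WeakDual ℂ B) : WeakDual ℂ B :=
  StrongDual.toWeakDual ((WeakDual.toStrongDual φ).comp
    ((starAlgHomToCLM M).comp (poisson G q)))

theorem convolve_apply (φ q : WeakDual ℂ B) (a : B) :
    convolve M φ q a = φ (M (poisson G q a)) := rfl

theorem continuous_convolve_left (q : WeakDual ℂ B) : Continuous fun φ => convolve M φ q :=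
  WeakDual.continuous_of_continuous_eval fun a => WeakDual.eval_continuous (M (poisson G q a))

variable {M} in
theorem smul_convolve (hM : ∀ g f, M (leftTranslate g f) = g • M f) (g : G) (φ q : WeakDual ℂ B) :
    g • convolve M φ q = convolve M (g • φ) q :=
  DFunLike.ext _ _ fun a => by
    rw [weakDual_smul_apply, convolve_apply, convolve_apply, weakDual_smul_apply, poisson_smul, hM]

variable [PartialOrder B] [StarOrderedRing B] {φ q x : WeakDual ℂ B} {L : Set (WeakDual ℂ B)}

theorem convolve_mem (hL : IsCompactConvexInvariant G L) (hφ : IsState φ) (hq : q ∈ L) :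
    convolve M φ q ∈ L := by
  by_contra hmem
  obtain ⟨a, u, haL, hu⟩ := exists_re_apply_lt_of_notMem hL.convex hL.isCompact.isClosed hmem
  exact hu.not_ge (hφ.re_map_le M fun s => (haL _ (hL.smul_mem s q hq)).le)

variable {M} in
theorem exists_mem_convolve_eq_self (hM : ∀ g f, M (leftTranslate g f) = g • M f)
    (hL : Minimal (IsCompactConvexInvariant G) L) {S : Set (WeakDual ℂ B)}
    (hS : IsCompactConvexInvariant G S) (hS_state : ∀ φ ∈ S, IsState φ) (hx : x ∈ L) :
    ∃ φ ∈ S, convolve M φ x = x := by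
  have hsubset : (fun φ => convolve M φ x) '' S ⊆ L := by
    rintro _ ⟨φ, hφ, rfl⟩
    exact convolve_mem M hL.prop (hS_state φ hφ) hx
  have hconvex : Convex ℝ ((fun φ => convolve M φ x) '' S) := by
    rintro _ ⟨φ₁, h₁, rfl⟩ _ ⟨φ₂, h₂, rfl⟩ a b ha hb hab
    exact ⟨a • φ₁ + b • φ₂, hS.convex h₁ h₂ ha hb hab, rfl⟩
  have himage : (fun φ => convolve M φ x) '' S = L := hL.eq_of_subset
    ⟨hS.isCompact.image (continuous_convolve_left M x), hS.nonempty.image _, hconvex, by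
      rintro g _ ⟨φ, hφ, rfl⟩
      exact ⟨g • φ, hS.smul_mem g φ hφ, (smul_convolve hM g φ x).symm⟩⟩ hsubset
  exact himage.ge hx

section Multiplicativity

variable {M} (hL : IsCompactConvexInvariant G L) (hx : x ∈ L.extremePoints ℝ) (hq : q ∈ L)
  (hφ : IsState φ) (hφx : convolve M φ q = x)

include hL hx hq hφ hφx

-- Conditioning `φ` on `R` and on `1 - R` splits `x = φ * q` into a convex combination of
-- convolutions in `L`, so by extremality the part weighted by `R` is again `x`.
theorem map_mul_poisson_sub_eq_zero_of_mem_unitInterval {R : lp (fun _ : G => ℂ) ∞}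
    (hR : ∀ s, 0 ≤ R s ∧ R s ≤ 1) (a : B) :
    φ (M (R * (poisson G q a - x a • 1))) = 0 := by
  have hcompl : ∀ s, 0 ≤ (1 - R) s := fun s => sub_nonneg.2 (hR s).2
  obtain ⟨φ₁, hφ₁, hmul₁⟩ := hφ.exists_isState_map_mul_eq M fun s => (hR s).1
  obtain ⟨φ₂, hφ₂, hmul₂⟩ := hφ.exists_isState_map_mul_eq M hcompl
  have hsum (b : B) : φ (M R) * convolve M φ₁ q b + φ (M (1 - R)) * convolve M φ₂ q b = x b := by
    rw [convolve_apply, convolve_apply, ← hmul₁, ← hmul₂, ← map_add, ← map_add, ← add_mul,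
      add_sub_cancel, one_mul, ← convolve_apply, hφx]
  have hone : φ (M R) + φ (M (1 - R)) = 1 := by
    rw [← map_add, ← map_add, add_sub_cancel, map_one, hφ.map_one]
  have hnonneg₁ := hφ.map_nonneg _ (map_nonneg_of_forall_nonneg M fun s => (hR s).1)
  have hnonneg₂ := hφ.map_nonneg _ (map_nonneg_of_forall_nonneg M hcompl)
  have hsegment : x ∈ segment ℝ (convolve M φ₁ q) (convolve M φ₂ q) := by
    obtain ⟨c, hc_nonneg, hc⟩ := RCLike.nonneg_iff_exists_ofReal.1 hnonneg₁
    obtain ⟨d, hd_nonneg, hd⟩ := RCLike.nonneg_iff_exists_ofReal.1 hnonneg₂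
    rw [← hc, ← hd] at hone hsum
    have hcd : c + d = 1 := Complex.ofReal_injective ((Complex.ofReal_add c d).trans hone)
    refine ⟨c, d, hc_nonneg, hd_nonneg, hcd, DFunLike.ext _ _ fun b => ?_⟩
    rw [← hsum]
    rfl
  have hgoal : φ (M R) * convolve M φ₁ q a = φ (M R) * x a := by
    rcases (mem_extremePoints_iff_forall_segment.1 hx).2 _ (convolve_mem M hL hφ₁ hq) _
      (convolve_mem M hL hφ₂ hq) hsegment with h₁ | h₂
    · rw [h₁]
    · have hsum_a := hsum a
      rw [h₂] at hsum_a
      linear_combination hsum_a - x a * hone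
  rw [mul_sub, map_sub, map_sub, hmul₁, ← convolve_apply, hgoal, mul_smul_comm, mul_one, map_smul,
    map_smul, smul_eq_mul, mul_comm, sub_self]

theorem map_mul_poisson_sub_eq_zero (R : lp (fun _ : G => ℂ) ∞) (a : B) :
    φ (M (R * (poisson G q a - x a • 1))) = 0 := by
  let V : Submodule ℂ (lp (fun _ : G => ℂ) ∞) := LinearMap.ker <|
    (φ : B →ₗ[ℂ] ℂ) ∘ₗ (M : lp (fun _ : G => ℂ) ∞ →ₗ[ℂ] B) ∘ₗ
      LinearMap.mulRight ℂ (poisson G q a - x a • 1)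
  have hV : V = ⊤ := eq_top_of_forall_mem_unitInterval fun f hf =>
    map_mul_poisson_sub_eq_zero_of_mem_unitInterval hL hx hq hφ hφx hf a
  exact (hV ▸ Submodule.mem_top : R ∈ V)

theorem map_poisson_mul (a b : B) : φ (M (poisson G q a) * b) = x a * φ b := by
  let D := poisson G q a - x a • 1
  have hD : φ (M D * star (M D)) = 0 := by
    rw [← map_star, ← map_mul, mul_comm]
    exact map_mul_poisson_sub_eq_zero hL hx hq hφ hφx (star D) a
  have hzero := hφ.map_mul_eq_zero_of_left hD b
  rwa [map_sub, map_smul, map_one, sub_mul, smul_mul_assoc, one_mul, map_sub, map_smul, sub_eq_zero]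
    at hzero

theorem map_mul_poisson (a b : B) : φ (b * M (poisson G q a)) = x a * φ b := by
  let D := poisson G q a - x a • 1
  have hD : φ (star (M D) * M D) = 0 := by
    rw [← map_star, ← map_mul]
    exact map_mul_poisson_sub_eq_zero hL hx hq hφ hφx (star D) a
  have hzero := hφ.map_mul_eq_zero_of_right hD b
  rwa [map_sub, map_smul, map_one, mul_sub, mul_smul_comm, mul_one, map_sub, map_smul, sub_eq_zero]
    at hzero

theorem mem_stabilizer_of_map_ne_zero (hM : ∀ g f, M (leftTranslate g f) = g • M f) {g : G} {v : B}
    (hv : ∀ b, v * b = (g • b) * v) (hφv : φ v ≠ 0) : g ∈ MulAction.stabilizer G x := by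
  refine DFunLike.ext _ _ fun a => mul_right_cancel₀ hφv ?_
  calc (g • x) a * φ v = φ (v * M (poisson G q (g⁻¹ • a))) :=
        (map_mul_poisson hL hx hq hφ hφx _ v).symm
    _ = φ (M (poisson G q a) * v) := by rw [hv, ← hM, ← poisson_smul, smul_inv_smul]
    _ = x a * φ v := map_poisson_mul hL hx hq hφ hφx a v

end Multiplicativity

theorem exists_equivariant_retraction (N : Subgroup G) :
    ∃ π : G → N, ∀ (n : N) (g : G), π (n * g) = n * π g := by
  obtain ⟨T, hT, -⟩ := N.exists_isComplement_right 1
  exact ⟨fun g => (hT.equiv g).1, fun n g => congrArg Prod.fst (hT.equiv_mul_left n g)⟩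

/-- Pullback of bounded real functions along `π`, with values regarded as complex numbers. -/
def pullbackBounded {X N : Type*} (π : X → N) :
    lp (fun _ : N => ℝ) ∞ →ₗ[ℝ] lp (fun _ : X => ℂ) ∞ where
  toFun f := ⟨fun s => (f (π s) : ℂ), memℓp_infty ⟨‖f‖, by
    rintro _ ⟨s, rfl⟩
    exact (Complex.norm_real _).trans_le (lp.norm_apply_le_norm ENNReal.top_ne_zero f _)⟩⟩
  map_add' f g := lp.ext (funext fun s => Complex.ofReal_add (f (π s)) (g (π s)))
  map_smul' c f := lp.ext <| funext fun s =>
    (Complex.ofReal_mul c (f (π s))).trans (Complex.real_smul).symm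

theorem pullbackBounded_translInfty {N : Subgroup G} {π : G → N}
    (hπ : ∀ (n : N) (g : G), π (n * g) = n * π g) (n : N) (f : lp (fun _ : N => ℝ) ∞) :
    pullbackBounded π (translInfty n f) = leftTranslate (n : G) (pullbackBounded π f) :=
  lp.ext (funext fun s => congrArg (fun m => (f m : ℂ)) (hπ n⁻¹ s).symm)

variable {M}

theorem isAmenable_of_le_stabilizer (hM : ∀ g f, M (leftTranslate g f) = g • M f)
    (hx : IsState x) {N : Subgroup G} (hN : N ≤ MulAction.stabilizer G x) : IsAmenable N := by
  obtain ⟨π, hπ⟩ := exists_equivariant_retraction N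
  have hpull_one : pullbackBounded π (1 : lp (fun _ : N => ℝ) ∞) = 1 :=
    lp.ext (funext fun _ => Complex.ofReal_one)
  refine ⟨Complex.reLm ∘ₗ
    ((x : B →ₗ[ℂ] ℂ) ∘ₗ (M : lp (fun _ : G => ℂ) ∞ →ₗ[ℂ] B)).restrictScalars ℝ ∘ₗ
      pullbackBounded π, ?_, fun f hf => ?_, fun n f => ?_⟩
  · change (x (M (pullbackBounded π 1))).re = 1
    rw [hpull_one, map_one, hx.map_one, Complex.one_re]
  · exact (Complex.nonneg_iff.1 (hx.map_nonneg _ (map_nonneg_of_forall_nonneg M fun s =>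
      Complex.zero_le_real.2 (hf (π s))))).1
  · change (x (M (pullbackBounded π (translInfty n f)))).re = (x (M (pullbackBounded π f))).re
    have hx_smul : ((n : G)⁻¹ • x) = x := inv_mem (hN n.2)
    rw [pullbackBounded_translInfty hπ, hM, ← inv_inv (n : G), ← weakDual_smul_apply, hx_smul]

theorem exists_mem_forall_apply_eq_zero (hM : ∀ g f, M (leftTranslate g f) = g • M f)
    (hc : {H : Subgroup G | IsAmenable H}.Countable)
    (hn : ∀ N : Subgroup G, N.Normal → IsAmenable N → N = ⊥)
    {S : Set (WeakDual ℂ B)} (hS : IsCompactConvexInvariant G S) (hS_state : ∀ φ ∈ S, IsState φ)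
    {v : G → B} (hv : ∀ s b, v s * b = (s • b) * v s) {F : Finset G} (hF : 1 ∉ F) :
    ∃ ψ ∈ S, ∀ s ∈ F, ψ (v s) = 0 := by
  obtain ⟨L, hLS, hL⟩ := hS.exists_minimal_subset
  obtain ⟨x, hx⟩ := hL.prop.isCompact.extremePoints_nonempty hL.prop.nonempty
  have hcount : (MulAction.stabilizer G '' L).Countable := hc.mono <| by
    rintro _ ⟨y, hy, rfl⟩
    exact isAmenable_of_le_stabilizer hM (hS_state y (hLS hy)) le_rfl
  have hcore : (MulAction.stabilizer G x).normalCore = ⊥ := hn _ inferInstance <|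
    isAmenable_of_le_stabilizer hM (hS_state x (hLS hx.1)) (Subgroup.normalCore_le _)
  obtain ⟨g, hg⟩ := exists_disjoint_stabilizer_smul hL hx hcount hcore hF
  obtain ⟨φ, hφS, hφx⟩ := exists_mem_convolve_eq_self hM hL hS hS_state hx.1
  refine ⟨g • φ, hS.smul_mem g φ hφS, fun s hs => ?_⟩
  by_contra hne
  have hconj (b : B) : (g⁻¹ • v s) * b = ((g⁻¹ * s * g) • b) * (g⁻¹ • v s) := by
    rw [mul_smul, mul_smul, ← smul_mul', ← hv, smul_mul', inv_smul_smul]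
  have hstab := mem_stabilizer_of_map_ne_zero hL.prop hx hx.1 (hS_state φ hφS) hφx hM hconj hne
  rw [MulAction.mem_stabilizer_iff, mul_smul, mul_smul, inv_smul_eq_iff] at hstab
  exact hg s hs hstab

end Dynamics

section L2Operators

/-- The C⋆-algebra of all bounded operators on `ℓ²(ι)`. -/
abbrev L2Operators (ι : Type*) := ℓ²(ι, ℂ) →L[ℂ] ℓ²(ι, ℂ)

variable {ι : Type*}

/-- The operator on `ℓ²(ι)` of pointwise multiplication by a bounded function. -/
def multiplicationOperator (f : lp (fun _ : ι => ℂ) ∞) : L2Operators ι :=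
  lp.holderL 2 (fun _ => ContinuousLinearMap.mul ℂ ℂ)
    (fun _ => (ContinuousLinearMap.opNorm_mul_le ℂ ℂ).trans_eq NNReal.coe_one.symm) f

theorem multiplicationOperator_apply (f : lp (fun _ : ι => ℂ) ∞) (ξ : ℓ²(ι, ℂ)) (s : ι) :
    multiplicationOperator f ξ s = f s * ξ s := rfl

theorem multiplicationOperator_star (f : lp (fun _ : ι => ℂ) ∞) :
    multiplicationOperator (star f) = star (multiplicationOperator f) := by
  rw [ContinuousLinearMap.star_eq_adjoint, ContinuousLinearMap.eq_adjoint_iff]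
  intro ξ η
  rw [lp.inner_eq_tsum, lp.inner_eq_tsum]
  refine tsum_congr fun s => ?_
  change inner ℂ (star (f s) * ξ s) (η s) = inner ℂ (ξ s) (f s * η s)
  simp only [RCLike.inner_apply, map_mul, Complex.star_def, Complex.conj_conj]
  ring

variable (ι) in
/-- `ℓ∞(ι)` as the algebra of multiplication operators on `ℓ²(ι)`. -/
def multiplicationStarAlgHom : lp (fun _ : ι => ℂ) ∞ →⋆ₐ[ℂ] L2Operators ι where
  toFun := multiplicationOperator
  map_one' := ContinuousLinearMap.ext fun ξ => lp.ext (funext fun s => one_mul (ξ s))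
  map_mul' f g :=
    ContinuousLinearMap.ext fun ξ => lp.ext (funext fun s => mul_assoc (f s) (g s) (ξ s))
  map_zero' := ContinuousLinearMap.ext fun ξ => lp.ext (funext fun s => zero_mul (ξ s))
  map_add' f g :=
    ContinuousLinearMap.ext fun ξ => lp.ext (funext fun s => add_mul (f s) (g s) (ξ s))
  commutes' _ := rfl
  map_star' := multiplicationOperator_star

open Classical in
/-- The point mass at `s`, a unit vector of `ℓ²(ι)`. -/
def pointMass (s : ι) : ℓ²(ι, ℂ) := lp.single 2 s (1 : ℂ)

theorem norm_pointMass (s : ι) : ‖pointMass s‖ = 1 := by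
  classical
  rw [pointMass, lp.norm_single two_pos, norm_one]

theorem inner_pointMass_pointMass {s t : ι} (hst : s ≠ t) :
    inner ℂ (pointMass s) (pointMass t) = 0 := by
  classical
  rw [pointMass, lp.inner_single_left, pointMass, lp.single_apply_ne _ _ _ hst, inner_zero_right]

theorem eq_zero_of_forall_apply_pointMass {b : L2Operators ι} (hb : ∀ s, b (pointMass s) = 0) :
    b = 0 := by
  classical
  refine lp.ext_continuousLinearMap ENNReal.ofNat_ne_top fun s => ContinuousLinearMap.ext_ring ?_
  exact hb s

end L2Operators

section RegularRepresentation

theorem lreg_apply (g : G) (f : ℓ²(G, ℂ)) (h : G) : lreg g f h = f (g⁻¹ * h) := by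
  unfold lreg lregE
  rfl

theorem lreg_one : lreg (1 : G) = 1 := by
  ext f k
  change lreg 1 f k = f k
  rw [lreg_apply, inv_one, one_mul]

theorem lreg_mul (g h : G) : lreg (g * h) = lreg g * lreg h := by
  ext f k
  change lreg (g * h) f k = lreg g (lreg h f) k
  rw [lreg_apply, lreg_apply, lreg_apply, mul_inv_rev, mul_assoc]

theorem star_lreg (g : G) : star (lreg g) = lreg g⁻¹ := by
  rw [ContinuousLinearMap.star_eq_adjoint, eq_comm, ContinuousLinearMap.eq_adjoint_iff]
  intro ξ η
  rw [lp.inner_eq_tsum, lp.inner_eq_tsum, ← (Equiv.mulLeft g).tsum_eq fun i =>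
    inner ℂ (ξ i) (lreg g η i)]
  simp only [lreg_apply, inv_inv, Equiv.coe_mulLeft, inv_mul_cancel_left]

variable (G) in
/-- The left regular representation as a homomorphism into the unitary group. -/
def lregUnitary : G →* unitary (L2Operators G) where
  toFun g := ⟨lreg g, by
    rw [Unitary.mem_iff, star_lreg, ← lreg_mul, ← lreg_mul, mul_inv_cancel, inv_mul_cancel,
      lreg_one]
    exact ⟨rfl, rfl⟩⟩
  map_one' := Subtype.ext lreg_one
  map_mul' g h := Subtype.ext (lreg_mul g h)

variable (G) in
/-- Conjugation by `λ`, as a homomorphism into the ⋆-automorphism group. -/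
def lregAut : G →* (L2Operators G ≃⋆ₐ[ℂ] L2Operators G) :=
  (Unitary.conjStarAlgAut ℂ (L2Operators G)).comp (lregUnitary G)

/-- `G` acts on the bounded operators on `ℓ²(G)` through conjugation by `λ`. -/
instance instCStarDynamicsL2Operators : CStarDynamics G (L2Operators G) where
  smul g b := lregAut G g b
  one_smul b := congrArg (· b) (map_one (lregAut G))
  mul_smul g h b := congrArg (· b) (map_mul (lregAut G) g h)
  smul_zero g := map_zero (lregAut G g)
  smul_add g := map_add (lregAut G g)
  smul_one g := map_one (lregAut G g)
  smul_mul g := map_mul (lregAut G g)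
  smul_comm g c b := map_smul (lregAut G g) c b
  smul_star g b := map_star (lregAut G g) b

theorem smul_eq_lreg_mul_mul_lreg (g : G) (b : L2Operators G) :
    g • b = lreg g * b * lreg g⁻¹ := by
  rw [← star_lreg]
  rfl

theorem lreg_mul_eq_smul_mul_lreg (g : G) (b : L2Operators G) : lreg g * b = (g • b) * lreg g := by
  rw [smul_eq_lreg_mul_mul_lreg, mul_assoc, ← lreg_mul, inv_mul_cancel, lreg_one, mul_one]

theorem multiplicationStarAlgHom_leftTranslate (g : G) (f : lp (fun _ : G => ℂ) ∞) :
    multiplicationStarAlgHom G (leftTranslate g f) = g • multiplicationStarAlgHom G f := by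
  rw [smul_eq_lreg_mul_mul_lreg]
  ext ξ s
  change f (g⁻¹ * s) * ξ s = lreg g (multiplicationOperator f (lreg g⁻¹ ξ)) s
  rw [lreg_apply, multiplicationOperator_apply, lreg_apply, inv_inv, mul_inv_cancel_left]

end RegularRepresentation

section CanonicalTrace

theorem lreg_pointMass_one (s : G) : lreg s (pointMass 1) = pointMass s := by
  classical
  ext t
  rw [lreg_apply, pointMass, pointMass, lp.single_apply, lp.single_apply, Pi.single_apply,
    Pi.single_apply]
  exact if_congr (inv_mul_eq_one.trans eq_comm) rfl rfl

variable (G) in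
/-- The canonical trace `τ(b) = ⟨δ₁, b δ₁⟩` on the bounded operators on `ℓ²(G)`. -/
def canonicalTrace : L2Operators G →L[ℂ] ℂ :=
  innerSL ℂ (pointMass (1 : G)) ∘L ContinuousLinearMap.apply ℂ ℓ²(G, ℂ) (pointMass (1 : G))

theorem canonicalTrace_apply (b : L2Operators G) :
    canonicalTrace G b = inner ℂ (pointMass 1) (b (pointMass 1)) := rfl

theorem norm_canonicalTrace_le (b : L2Operators G) : ‖canonicalTrace G b‖ ≤ ‖b‖ := by
  rw [canonicalTrace_apply]
  calc ‖inner ℂ (pointMass 1) (b (pointMass 1))‖ ≤ ‖pointMass (1 : G)‖ * ‖b (pointMass 1)‖ :=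
        norm_inner_le_norm _ _
    _ ≤ ‖pointMass (1 : G)‖ * (‖b‖ * ‖pointMass (1 : G)‖) := by gcongr; exact b.le_opNorm _
    _ = ‖b‖ := by rw [norm_pointMass, one_mul, mul_one]

theorem canonicalTrace_one : canonicalTrace G 1 = 1 := by
  change inner ℂ (pointMass (1 : G)) (pointMass 1) = 1
  rw [inner_self_eq_norm_sq_to_K, norm_pointMass, RCLike.ofReal_one, one_pow]

theorem canonicalTrace_lreg {s : G} (hs : s ≠ 1) : canonicalTrace G (lreg s) = 0 := by
  rw [canonicalTrace_apply, lreg_pointMass_one, inner_pointMass_pointMass hs.symm]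

theorem apply_pointMass_one_eq_zero {b : L2Operators G} (hb : canonicalTrace G (star b * b) = 0) :
    b (pointMass 1) = 0 := by
  rw [canonicalTrace_apply, ContinuousLinearMap.star_eq_adjoint] at hb
  exact inner_self_eq_zero.1 ((ContinuousLinearMap.adjoint_inner_right _ _ _).symm.trans hb)

end CanonicalTrace

section ReducedAlgebra

instance instCompleteSpaceRedCstar : CompleteSpace (redCstar G) := by
  unfold redCstar
  exact (StarSubalgebra.isClosed_topologicalClosure _).completeSpace_coe

theorem lreg_mem_redCstar (g : G) : lreg g ∈ redCstar G := by
  unfold redCstar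
  exact StarSubalgebra.le_topologicalClosure _ (StarAlgebra.subset_adjoin ℂ _ ⟨g, rfl⟩)

theorem adjoin_range_lreg_eq_span :
    Subalgebra.toSubmodule (StarAlgebra.adjoin ℂ (Set.range (lreg (G := G)))).toSubalgebra =
      Submodule.span ℂ (Set.range lreg) := by
  let lregRange : Submonoid (L2Operators G) :=
    { carrier := Set.range lreg
      one_mem' := ⟨1, lreg_one⟩
      mul_mem' := by
        rintro _ _ ⟨g, rfl⟩ ⟨h, rfl⟩
        exact ⟨g * h, lreg_mul g h⟩ }
  have hstar : star (Set.range (lreg (G := G))) ⊆ Set.range lreg := by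
    rintro _ ⟨g, hg⟩
    exact ⟨g⁻¹, by rw [← star_lreg, hg, star_star]⟩
  rw [StarAlgebra.adjoin_eq_span, Set.union_eq_left.2 hstar]
  exact congrArg _ (congrArg _ lregRange.closure_eq)

theorem exists_norm_sub_linearCombination_lreg_lt {a : L2Operators G} (ha : a ∈ redCstar G) {ε : ℝ}
    (hε : 0 < ε) : ∃ c : G →₀ ℂ, ‖a - Finsupp.linearCombination ℂ lreg c‖ < ε := by
  unfold redCstar at ha
  obtain ⟨p, hp, hap⟩ := Metric.mem_closure_iff.1 ha ε hε
  obtain ⟨c, rfl⟩ := (Finsupp.mem_span_range_iff_exists_finsupp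
    (R := ℂ)).1 (adjoin_range_lreg_eq_span.le hp)
  exact ⟨c, (dist_eq_norm _ _).symm.trans_lt hap⟩

theorem eq_bot_of_forall_canonicalTrace_eq_zero {I : TwoSidedIdeal (redCstar G)}
    (hI : ∀ a ∈ I, canonicalTrace G a = 0) : I = ⊥ := by
  refine eq_bot_iff.2 fun a ha => (TwoSidedIdeal.mem_bot _).2 (Subtype.ext ?_)
  refine eq_zero_of_forall_apply_pointMass fun s => ?_
  let b : redCstar G := a * ⟨lreg s, lreg_mem_redCstar s⟩
  have htrace : canonicalTrace G (star (b : L2Operators G) * (b : L2Operators G)) = 0 :=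
    hI (star b * b) (I.mul_mem_left _ _ (I.mul_mem_right _ _ ha))
  rw [← lreg_pointMass_one s]
  exact apply_pointMass_one_eq_zero htrace

/-- The states of the bounded operators on `ℓ²(G)` that vanish on the ideal `I`. -/
def annihilatingStates (I : TwoSidedIdeal (redCstar G)) : Set (WeakDual ℂ (L2Operators G)) :=
  {φ | IsState φ ∧ ∀ a ∈ I, φ (a : L2Operators G) = 0}

theorem annihilatingStates_nonempty {I : TwoSidedIdeal (redCstar G)} (hI : I ≠ ⊤) :
    (annihilatingStates I).Nonempty := by
  have hI_ne_top : I.asIdeal ≠ ⊤ := fun htop => hI <| eq_top_iff.2 fun a _ =>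
    TwoSidedIdeal.mem_asIdeal.1 (htop ▸ Submodule.mem_top)
  obtain ⟨φ, hφ, hφI⟩ := exists_isState_eq_zero_on
    (V := (I.asIdeal.restrictScalars ℂ).map (redCstar G).toSubalgebra.val.toLinearMap) <| by
      rintro _ ⟨a, ha, rfl⟩
      by_contra! hlt
      exact hI_ne_top (I.asIdeal.eq_top_of_norm_lt_one ha hlt)
  exact ⟨φ, hφ, fun a ha => hφI _ ⟨a, ha, rfl⟩⟩

theorem isCompactConvexInvariant_annihilatingStates {I : TwoSidedIdeal (redCstar G)} (hI : I ≠ ⊤) :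
    IsCompactConvexInvariant G (annihilatingStates I) where
  isCompact := by
    have hclosed :
        IsClosed {φ : WeakDual ℂ (L2Operators G) | ∀ a ∈ I, φ (a : L2Operators G) = 0} := by
      simp only [Set.ofPred_forall]
      exact isClosed_biInter fun a _ => isClosed_eq (WeakDual.eval_continuous _) continuous_const
    exact isCompact_setOf_isState.inter_right hclosed
  nonempty := annihilatingStates_nonempty hI
  convex := fun φ hφ ψ hψ a b ha hb hab =>
    ⟨convex_setOf_isState hφ.1 hψ.1 ha hb hab, fun c hc => by
      change a • φ c + b • ψ c = 0
      rw [hφ.2 c hc, hψ.2 c hc, smul_zero, smul_zero, add_zero]⟩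
  smul_mem := fun g φ hφ => ⟨hφ.1.smul g, fun a ha => by
    rw [weakDual_smul_apply, smul_eq_lreg_mul_mul_lreg]
    exact hφ.2 (⟨lreg g⁻¹, lreg_mem_redCstar _⟩ * a * ⟨lreg g⁻¹⁻¹, lreg_mem_redCstar _⟩)
      (I.mul_mem_right _ _ (I.mul_mem_left _ _ ha))⟩

theorem canonicalTrace_eq_zero_of_forall_exists_state {a : L2Operators G} (ha : a ∈ redCstar G)
    (hstates : ∀ F : Finset G, 1 ∉ F →
      ∃ ψ : WeakDual ℂ (L2Operators G), IsState ψ ∧ ψ a = 0 ∧ ∀ s ∈ F, ψ (lreg s) = 0) :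
    canonicalTrace G a = 0 := by
  classical
  refine norm_le_zero_iff.1 (le_of_forall_pos_le_add fun ε hε => ?_)
  obtain ⟨c, hc⟩ := exists_norm_sub_linearCombination_lreg_lt ha (half_pos hε)
  set p := Finsupp.linearCombination ℂ lreg c
  obtain ⟨ψ, hψ, hψa, hψF⟩ := hstates (c.support.erase 1) (Finset.notMem_erase 1 _)
  have hagree : ∀ s ∈ c.support, canonicalTrace G (lreg s) = ψ (lreg s) := fun s hs => by
    by_cases hs_one : s = 1
    · rw [hs_one, lreg_one, canonicalTrace_one, hψ.map_one]
    · rw [canonicalTrace_lreg hs_one, hψF s (Finset.mem_erase.2 ⟨hs_one, hs⟩)]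
  have hp : canonicalTrace G p = ψ p := by
    simp only [p, Finsupp.linearCombination_apply, Finsupp.sum, map_sum, map_smul]
    exact Finset.sum_congr rfl fun s hs => by rw [hagree s hs]
  calc ‖canonicalTrace G a‖ = ‖canonicalTrace G (a - p) - ψ (a - p)‖ := by
        rw [map_sub, map_sub, hp, hψa, zero_sub, sub_neg_eq_add, sub_add_cancel]
    _ ≤ ‖a - p‖ + ‖a - p‖ :=
        norm_sub_le_of_le (norm_canonicalTrace_le _) (hψ.norm_map_le _)
    _ ≤ 0 + ε := by linarith

end ReducedAlgebra

/-- A discrete group with only countably many amenable subgroups and no non-trivial normal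
amenable subgroups is C*-simple. -/
theorem cstarSimple_of_countably_many_amenable_subgroups (G : Type u) [Group G]
    (hc : {H : Subgroup G | IsAmenable H}.Countable)
    (hn : ∀ N : Subgroup G, N.Normal → IsAmenable N → N = ⊥) :
    IsCstarSimple G := by
  intro I _
  refine or_iff_not_imp_right.2 fun hI =>
    eq_bot_of_forall_canonicalTrace_eq_zero fun a ha =>
      canonicalTrace_eq_zero_of_forall_exists_state a.2 fun F hF => ?_
  obtain ⟨ψ, hψ, hψF⟩ := exists_mem_forall_apply_eq_zero multiplicationStarAlgHom_leftTranslate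
    hc hn (isCompactConvexInvariant_annihilatingStates hI) (fun φ hφ => hφ.1)
    lreg_mul_eq_smul_mul_lreg hF
  exact ⟨ψ, hψ.1, hψ.2 a ha, hψF⟩
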